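/- Let F be a collection of finite sets, all of the same cardinality α. Then F is a maximal hke collection if and only if |⋃F| = 2α and there exists an equivalence relation on ⋃F with exactly α equivalence classes, each of which has exactly two elements, such that F equals the collection of all subsets B of ⋃F with |B| = α that intersect every equivalence class. -/

import Mathlib

open Finset

/-- The union of a finite collection of finite sets. -/
def famUnion (Γ : Finset (Finset ℕ)) : Finset ℕ := Γ.sup id

/-- The intersection of a finite collection of finite sets
(equal to the usual intersection when the collection is nonempty). -/
def famInter (Γ : Finset (Finset ℕ)) : Finset ℕ :=
  (Γ.sup id).filter (fun x => ∀ A ∈ Γ, x ∈ A)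

/-- `F` is a hereditary König–Egerváry (hke) collection with `α(F) = α`:
`α` is a positive integer and `|⋃Γ| + |⋂Γ| = 2α` for every nonempty subcollection `Γ` of `F`. -/
def IsHKE (F : Finset (Finset ℕ)) (α : ℕ) : Prop :=
  0 < α ∧ ∀ Γ ⊆ F, Γ.Nonempty → (famUnion Γ).card + (famInter Γ).card = 2 * α

/-- `F` is a maximal hke collection: it is an hke collection and no collection
properly containing it is an hke collection. -/
def IsMaxHKE (F : Finset (Finset ℕ)) : Prop :=
  (∃ α, IsHKE F α) ∧ ∀ F' : Finset (Finset ℕ), F ⊂ F' → ¬ ∃ β, IsHKE F' β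

theorem mem_famUnion' {Γ : Finset (Finset ℕ)} {x : ℕ} : x ∈ famUnion Γ ↔ ∃ A ∈ Γ, x ∈ A := by
  simp [famUnion, Finset.mem_sup]

theorem mem_famInter' {Γ : Finset (Finset ℕ)} (h : Γ.Nonempty) {x : ℕ} :
    x ∈ famInter Γ ↔ ∀ A ∈ Γ, x ∈ A := by
  unfold famInter
  rw [Finset.mem_filter]
  refine ⟨fun h => h.2, fun h' => ⟨?_, h'⟩⟩
  obtain ⟨A, hA⟩ := h
  exact mem_famUnion'.2 ⟨A, hA, h' A hA⟩

/-- pairings -/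
def IsPairing (P : Finset (Finset ℕ)) (α : ℕ) : Prop :=
  P.card = α ∧ (∀ c ∈ P, c.card = 2) ∧ (∀ c ∈ P, ∀ c' ∈ P, c ≠ c' → Disjoint c c')

/-- transversals -/
def trans' (P : Finset (Finset ℕ)) (α : ℕ) : Finset (Finset ℕ) :=
  (famUnion P).powerset.filter (fun B => B.card = α ∧ ∀ c ∈ P, (B ∩ c).Nonempty)

theorem card_split {P : Finset (Finset ℕ)} {α : ℕ} (hP : IsPairing P α) {B : Finset ℕ}
    (hB : B ⊆ famUnion P) : B.card = ∑ c ∈ P, (B ∩ c).card := by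
  rw [← Finset.card_biUnion]
  · congr 1
    ext x
    simp only [Finset.mem_biUnion, Finset.mem_inter]
    constructor
    · intro hx
      obtain ⟨c, hc, hxc⟩ := mem_famUnion'.1 (hB hx)
      exact ⟨c, hc, hx, hxc⟩
    · rintro ⟨c, _, h, _⟩
      exact h
  · intro c hc d hd hcd
    exact (hP.2.2 c hc d hd hcd).mono Finset.inter_subset_right Finset.inter_subset_right

theorem card_inter_one {P : Finset (Finset ℕ)} {α : ℕ} (hP : IsPairing P α) {B : Finset ℕ}
    (hB : B ∈ trans' P α) : ∀ c ∈ P, (B ∩ c).card = 1 := by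
  simp only [trans', Finset.mem_filter, Finset.mem_powerset] at hB
  obtain ⟨hBU, hBc, hBP⟩ := hB
  have h1 := card_split hP hBU
  have h2 : ∑ c ∈ P, 1 = ∑ c ∈ P, (B ∩ c).card := by
    rw [← h1, hBc]; simp [hP.1]
  have h3 := (Finset.sum_eq_sum_iff_of_le (fun c hc => Finset.card_pos.2 (hBP c hc))).1 h2
  intro c hc
  exact (h3 c hc).symm

theorem trans_pair {P : Finset (Finset ℕ)} {α : ℕ} (hP : IsPairing P α) {B : Finset ℕ}
    (hB : B ∈ trans' P α) {x y : ℕ} (hxy : x ≠ y) (hc : {x, y} ∈ P) : x ∈ B ↔ y ∉ B := by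
  have h := card_inter_one hP hB _ hc
  by_cases hx : x ∈ B <;> by_cases hy : y ∈ B
  · have : B ∩ {x, y} = {x, y} := by ext z; simp; rintro (rfl | rfl) <;> assumption
    rw [this, Finset.card_pair hxy] at h
    omega
  · simp [hx, hy]
  · simp [hx, hy]
  · have : B ∩ {x, y} = ∅ := by
      ext z; simp; intro hz; constructor <;> rintro rfl <;> contradiction
    rw [this] at h
    simp at h

theorem card_union {P : Finset (Finset ℕ)} {α : ℕ} (hP : IsPairing P α) :
    (famUnion P).card = 2 * α := by
  rw [card_split hP (subset_refl _)]
  have : ∀ c ∈ P, (famUnion P ∩ c).card = 2 := by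
    intro c hc
    rw [Finset.inter_eq_right.2, hP.2.1 c hc]
    intro x hx
    exact mem_famUnion'.2 ⟨c, hc, hx⟩
  rw [Finset.sum_congr rfl this]
  simp [hP.1, mul_comm]

theorem trans_hke {P : Finset (Finset ℕ)} {α : ℕ} (hα : 0 < α) (hP : IsPairing P α) :
    IsHKE (trans' P α) α := by
  refine ⟨hα, fun Γ hΓ hne => ?_⟩
  have hU : famUnion Γ ⊆ famUnion P := by
    intro x hx
    obtain ⟨A, hA, hxA⟩ := mem_famUnion'.1 hx
    have := hΓ hA
    simp only [trans', Finset.mem_filter, Finset.mem_powerset] at this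
    exact this.1 hxA
  have hI : famInter Γ ⊆ famUnion P := (Finset.filter_subset _ _).trans hU
  rw [card_split hP hU, card_split hP hI, ← Finset.sum_add_distrib]
  have : ∀ c ∈ P, (famUnion Γ ∩ c).card + (famInter Γ ∩ c).card = 2 := by
    intro c hc
    obtain ⟨x, y, hxy, rfl⟩ := Finset.card_eq_two.1 (hP.2.1 c hc)
    have hx : x ∈ famInter Γ ↔ y ∉ famUnion Γ := by
      rw [mem_famInter' hne, mem_famUnion']
      push Not
      exact forall₂_congr fun A hA => trans_pair hP (hΓ hA) hxy hc
    have hy : y ∈ famInter Γ ↔ x ∉ famUnion Γ := by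
      rw [mem_famInter' hne, mem_famUnion']
      push Not
      refine forall₂_congr fun A hA => ?_
      have := trans_pair hP (hΓ hA) hxy hc
      tauto
    have key : ∀ S : Finset ℕ, (S ∩ {x, y}).card
        = (if x ∈ S then 1 else 0) + (if y ∈ S then 1 else 0) := by
      intro S
      rw [Finset.inter_comm, ← Finset.filter_mem_eq_inter, Finset.card_filter,
        Finset.sum_pair hxy]
    rw [key, key]
    simp only [hx, hy]
    split_ifs <;> simp_all
  rw [Finset.sum_congr rfl this]
  simp [hP.1, mul_comm]

theorem image_mem_trans {P : Finset (Finset ℕ)} {α : ℕ} (hP : IsPairing P α)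
    (f : Finset ℕ → ℕ) (hf : ∀ c ∈ P, f c ∈ c) : P.image f ∈ trans' P α := by
  simp only [trans', Finset.mem_filter, Finset.mem_powerset]
  refine ⟨?_, ?_, ?_⟩
  · intro x hx
    obtain ⟨c, hc, rfl⟩ := Finset.mem_image.1 hx
    exact mem_famUnion'.2 ⟨c, hc, hf c hc⟩
  · rw [Finset.card_image_of_injOn, hP.1]
    intro c hc d hd hcd
    by_contra hne
    have := Finset.disjoint_left.1 (hP.2.2 c hc d hd hne) (hf c hc)
    apply this
    have h2 := hf d hd
    rwa [← hcd] at h2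
  · intro c hc
    exact ⟨f c, Finset.mem_inter.2 ⟨Finset.mem_image_of_mem f hc, hf c hc⟩⟩

theorem exists_sel {P : Finset (Finset ℕ)} {α : ℕ} (hP : IsPairing P α) :
    ∃ f : Finset ℕ → ℕ, ∀ c ∈ P, f c ∈ c := by
  have : ∀ c : Finset ℕ, ∃ x, c ∈ P → x ∈ c := by
    intro c
    by_cases hc : c ∈ P
    · have h2 := hP.2.1 c hc
      obtain ⟨x, hx⟩ := Finset.card_pos.1 (by omega : 0 < c.card)
      exact ⟨x, fun _ => hx⟩
    · exact ⟨0, fun h => absurd h hc⟩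
  choose f hf using this
  exact ⟨f, hf⟩

theorem update_sel {P : Finset (Finset ℕ)} {f : Finset ℕ → ℕ} (hf : ∀ c ∈ P, f c ∈ c)
    {c : Finset ℕ} {x : ℕ} (hx : x ∈ c) : ∀ d ∈ P, Function.update f c x d ∈ d := by
  intro d hd
  by_cases h : d = c
  · subst h; simpa using hx
  · rw [Function.update_of_ne h]; exact hf d hd

theorem union_trans {P : Finset (Finset ℕ)} {α : ℕ} (hP : IsPairing P α) :
    famUnion (trans' P α) = famUnion P := by
  ext x
  rw [mem_famUnion']
  constructor
  · rintro ⟨A, hA, hx⟩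
    simp only [trans', Finset.mem_filter, Finset.mem_powerset] at hA
    exact hA.1 hx
  · intro hx
    obtain ⟨c, hc, hxc⟩ := mem_famUnion'.1 hx
    obtain ⟨f, hf⟩ := exists_sel hP
    refine ⟨_, image_mem_trans hP _ (update_sel hf hxc), ?_⟩
    exact Finset.mem_image.2 ⟨c, hc, by simp⟩

theorem hke_card {F : Finset (Finset ℕ)} {β : ℕ} (h : IsHKE F β) {A : Finset ℕ} (hA : A ∈ F) :
    A.card = β := by
  have := h.2 {A} (by simpa using hA) (by simp)
  have h1 : famUnion {A} = A := by ext; simp [mem_famUnion']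
  have h2 : famInter {A} = A := by ext; rw [mem_famInter' (by simp)]; simp
  rw [h1, h2] at this
  omega

theorem trans_max {P : Finset (Finset ℕ)} {α : ℕ} (hα : 0 < α) (hP : IsPairing P α) :
    IsMaxHKE (trans' P α) := by
  refine ⟨⟨α, trans_hke hα hP⟩, ?_⟩
  rintro F' hF' ⟨β, hβ⟩
  obtain ⟨f, hf⟩ := exists_sel hP
  have hA0 := image_mem_trans hP f hf
  obtain ⟨hsub, B, hBF, hB⟩ := Finset.ssubset_iff_exists_subset_erase.1 hF' |>.elim
    (fun B h => (⟨hF'.1, B, h.1, fun hB => by simpa using h.2 hB⟩ :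
      trans' P α ⊆ F' ∧ ∃ B, B ∈ F' ∧ B ∉ trans' P α))
  have hβα : β = α := by
    rw [← hke_card hβ (hsub hA0), ← hke_card (trans_hke hα hP) hA0]
  subst hβα
  have hBU : B ⊆ famUnion P := by
    have h1 := hβ.2 (insert B (trans' P β)) (Finset.insert_subset hBF hsub) (by simp)
    have h2 : famUnion P ⊆ famUnion (insert B (trans' P β)) := by
      rw [← union_trans hP]
      intro x hx
      obtain ⟨A, hA, h⟩ := mem_famUnion'.1 hx
      exact mem_famUnion'.2 ⟨A, Finset.mem_insert_of_mem hA, h⟩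
    have h3 := Finset.eq_of_subset_of_card_le h2 (by rw [card_union hP]; omega)
    rw [h3]
    intro x hx
    exact mem_famUnion'.2 ⟨B, Finset.mem_insert_self _ _, hx⟩
  have hBc := hke_card hβ hBF
  have : ∃ c ∈ P, ¬ (B ∩ c).Nonempty := by
    by_contra! h
    apply hB
    simp only [trans', Finset.mem_filter, Finset.mem_powerset]
    exact ⟨hBU, hBc, h⟩
  obtain ⟨c, hc, hBn⟩ := this
  have hBn' : ∀ z ∈ B, z ∉ c := fun z hz hzc => hBn ⟨z, Finset.mem_inter.2 ⟨hz, hzc⟩⟩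
  obtain ⟨x, y, hxy, hcxy⟩ := Finset.card_eq_two.1 (hP.2.1 c hc)
  have hxc : x ∈ c := by simp [hcxy]
  have hyc : y ∈ c := by simp [hcxy]
  set A := P.image (Function.update f c x) with hAdef
  set A' := P.image (Function.update f c y) with hAdef'
  have hA : A ∈ trans' P β := image_mem_trans hP _ (update_sel hf hxc)
  have hA' : A' ∈ trans' P β := image_mem_trans hP _ (update_sel hf hyc)
  have hxA : x ∈ A := Finset.mem_image.2 ⟨c, hc, by simp⟩
  have hyA' : y ∈ A' := Finset.mem_image.2 ⟨c, hc, by simp⟩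
  have hyA : y ∉ A := (trans_pair hP hA hxy (hcxy ▸ hc)).1 hxA
  have e1 := hβ.2 {A, B} (by
    intro z hz; simp at hz; rcases hz with rfl | rfl
    · exact hsub hA
    · exact hBF) (by simp)
  have e2 := hβ.2 {A, A', B} (by
    intro z hz; simp at hz; rcases hz with rfl | rfl | rfl
    · exact hsub hA
    · exact hsub hA'
    · exact hBF) (by simp)
  have hAA' : ∀ z, z ∉ c → (z ∈ A ↔ z ∈ A') := by
    intro z hz
    simp only [hAdef, hAdef', Finset.mem_image]
    refine exists_congr fun d => and_congr_right fun hd => ?_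
    by_cases h : d = c
    · subst h
      simp only [Function.update_self]
      constructor <;> rintro rfl <;> contradiction
    · rw [Function.update_of_ne h, Function.update_of_ne h]
  have i1 : famInter {A, A', B} = famInter {A, B} := by
    ext z
    rw [mem_famInter' (by simp), mem_famInter' (by simp)]
    simp only [Finset.mem_insert, Finset.mem_singleton, forall_eq_or_imp, forall_eq]
    constructor
    · tauto
    · rintro ⟨h1, h2⟩
      exact ⟨h1, (hAA' z (hBn' z h2)).1 h1, h2⟩
  have u1 : famUnion {A, A', B} = insert y (famUnion {A, B}) := by
    ext z
    simp only [mem_famUnion', Finset.mem_insert, Finset.mem_singleton, exists_eq_or_imp,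
      exists_eq_left]
    by_cases hz : z ∈ c
    · rw [hcxy] at hz
      simp at hz
      rcases hz with rfl | rfl
      · simp [hxA]
      · simp [hyA']
    · have := hAA' z hz
      have : z ≠ y := fun h => hz (h ▸ hyc)
      tauto
  have hy : y ∉ famUnion {A, B} := by
    simp only [mem_famUnion', Finset.mem_insert, Finset.mem_singleton, exists_eq_or_imp,
      exists_eq_left]
    rintro (h | h)
    · exact hyA h
    · exact hBn' y h hyc
  rw [u1, i1, Finset.card_insert_of_notMem hy] at e2
  omega

theorem fiber_count (F : Finset (Finset ℕ)) (V W : Finset ℕ) (g h : ℕ → Finset (Finset ℕ))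
    (hg : ∀ x, g x ⊆ F) (hh : ∀ x, h x ⊆ F)
    (H : ∀ Γ ⊆ F, (V.filter (fun x => Γ ⊆ g x)).card = (W.filter (fun x => Γ ⊆ h x)).card) :
    ∀ n, ∀ S ⊆ F, F.card - S.card = n →
      (V.filter (fun x => g x = S)).card = (W.filter (fun x => h x = S)).card := by
  intro n
  induction n using Nat.strong_induction_on with
  | _ n ih =>
    intro S hS hn
    have key : ∀ (V : Finset ℕ) (g : ℕ → Finset (Finset ℕ)), (∀ x, g x ⊆ F) →
        (V.filter (fun x => S ⊆ g x)).card = (V.filter (fun x => g x = S)).card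
          + ∑ T ∈ F.powerset.filter (fun T => S ⊂ T), (V.filter (fun x => g x = T)).card := by
      intro V g hg
      have h1 : V.filter (fun x => S ⊆ g x)
          = V.filter (fun x => g x = S) ∪ V.filter (fun x => S ⊂ g x) := by
        ext x
        simp only [Finset.mem_filter, Finset.mem_union, subset_iff_ssubset_or_eq]
        constructor
        · rintro ⟨a, b | b⟩
          · exact Or.inr ⟨a, b⟩
          · exact Or.inl ⟨a, b.symm⟩
        · rintro (⟨a, b⟩ | ⟨a, b⟩)
          · exact ⟨a, Or.inr b.symm⟩
          · exact ⟨a, Or.inl b⟩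
      rw [h1, Finset.card_union_of_disjoint]
      · congr 1
        rw [Finset.card_eq_sum_card_fiberwise (f := g)
          (t := F.powerset.filter (fun T => S ⊂ T))]
        · refine Finset.sum_congr rfl fun T hT => ?_
          congr 1
          ext x
          simp only [Finset.mem_filter] at hT ⊢
          constructor
          · rintro ⟨⟨a, _⟩, b⟩; exact ⟨a, b⟩
          · rintro ⟨a, b⟩; exact ⟨⟨a, b ▸ hT.2⟩, b⟩
        · intro x hx
          simp at hx ⊢
          exact ⟨hg x, hx.2⟩
      · rw [Finset.disjoint_left]
        intro x hx hx'
        simp only [Finset.mem_filter] at hx hx'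
        exact (hx.2 ▸ hx'.2).ne rfl
    have h1 := H S hS
    rw [key V g hg, key W h hh] at h1
    have h2 : ∑ T ∈ F.powerset.filter (fun T => S ⊂ T), (V.filter (fun x => g x = T)).card
        = ∑ T ∈ F.powerset.filter (fun T => S ⊂ T), (W.filter (fun x => h x = T)).card := by
      refine Finset.sum_congr rfl fun T hT => ?_
      simp only [Finset.mem_filter, Finset.mem_powerset] at hT
      have c1 := Finset.card_lt_card hT.2
      have c2 := Finset.card_le_card hT.1
      exact ih (F.card - T.card) (by omega) T hT.1 rfl
    omega

theorem fiber_equiv {β : Type} [DecidableEq β] (V W : Finset ℕ) (g h : ℕ → β)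
    (H : ∀ S, (V.filter (fun x => g x = S)).card = (W.filter (fun x => h x = S)).card) :
    ∃ e : V ≃ W, ∀ x : V, h (e x) = g x := by
  have E : ∀ S, Nonempty ({x : V // g x = S} ≃ {x : W // h x = S}) := by
    intro S
    refine Fintype.card_eq.1 ?_
    have k : ∀ (V : Finset ℕ) (g : ℕ → β), Fintype.card {x : V // g x = S}
        = (V.filter (fun x => g x = S)).card := by
      intro V g
      rw [← Fintype.card_coe]
      refine Fintype.card_congr ⟨fun x => ⟨x.1.1, Finset.mem_filter.2 ⟨x.1.2, x.2⟩⟩,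
        fun x => ⟨⟨x.1, (Finset.mem_filter.1 x.2).1⟩, (Finset.mem_filter.1 x.2).2⟩, ?_, ?_⟩
      · intro x; rfl
      · intro x; rfl
    rw [k, k, H]
  replace E := fun S => (E S).some
  refine ⟨(Equiv.sigmaFiberEquiv (fun x : V => g x)).symm.trans
    ((Equiv.sigmaCongrRight E).trans (Equiv.sigmaFiberEquiv (fun x : W => h x))), ?_⟩
  intro x
  exact (E (g x) ⟨x, rfl⟩).2

theorem exists_ext {F : Finset (Finset ℕ)} {α : ℕ} (hF : IsHKE F α) (hne : F.Nonempty) :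
    ∃ P, IsPairing P α ∧ F ⊆ trans' P α := by
  obtain ⟨A₀, hA₀⟩ := hne
  have hUc : (famUnion F).card ≤ 2 * α := by
    have := hF.2 F (subset_refl _) ⟨A₀, hA₀⟩; omega
  obtain ⟨V, hUV, hV⟩ := Infinite.exists_superset_card_eq (famUnion F) _ hUc
  have hsub : ∀ A ∈ F, A ⊆ V := fun A hA x hx => hUV (mem_famUnion'.2 ⟨A, hA, hx⟩)
  have hcount := fiber_count F A₀ (V \ A₀) (fun x => F.filter (fun A => x ∈ A))
    (fun x => F.filter (fun A => x ∉ A)) (fun _ => Finset.filter_subset _ _)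
    (fun _ => Finset.filter_subset _ _) (by
      intro Γ hΓ
      have hs : insert A₀ Γ ⊆ F := Finset.insert_subset hA₀ hΓ
      have h := hF.2 (insert A₀ Γ) hs (by simp)
      have e1 : A₀.filter (fun x => Γ ⊆ F.filter (fun A => x ∈ A)) = famInter (insert A₀ Γ) := by
        ext x
        rw [mem_famInter' (by simp)]
        simp only [Finset.mem_filter, Finset.mem_insert, forall_eq_or_imp, Finset.subset_iff]
        exact and_congr_right fun _ => forall₂_congr fun A hA => by simp [hΓ hA]
      have e2 : (V \ A₀).filter (fun x => Γ ⊆ F.filter (fun A => x ∉ A))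
          = V \ famUnion (insert A₀ Γ) := by
        ext x
        simp only [Finset.mem_filter, Finset.mem_insert, Finset.mem_sdiff, mem_famUnion',
          Finset.subset_iff, exists_eq_or_imp, not_or, not_exists, not_and, and_assoc]
        refine and_congr_right fun _ => and_congr_right fun _ => forall₂_congr fun A hA => ?_
        simp [hΓ hA]
      have hUV' : famUnion (insert A₀ Γ) ⊆ V := by
        intro x hx
        obtain ⟨A, hA, hxA⟩ := mem_famUnion'.1 hx
        exact hsub A (hs hA) hxA
      rw [e1, e2, Finset.card_sdiff_of_subset hUV', hV]
      omega)
  obtain ⟨e, he⟩ := fiber_equiv A₀ (V \ A₀) (fun x => F.filter (fun A => x ∈ A))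
    (fun x => F.filter (fun A => x ∉ A)) (by
      intro S
      by_cases hS : S ⊆ F
      · exact hcount _ S hS rfl
      · rw [Finset.filter_false_of_mem, Finset.filter_false_of_mem]
        · rintro x _ rfl; exact hS (Finset.filter_subset _ _)
        · rintro x _ rfl; exact hS (Finset.filter_subset _ _))
  have he' : ∀ x : A₀, ∀ A ∈ F, ((e x : ℕ) ∉ A ↔ (x : ℕ) ∈ A) := by
    intro x A hA
    have := Finset.ext_iff.1 (he x) A
    simpa [hA] using this
  have heA : ∀ x : A₀, (e x : ℕ) ∉ A₀ := fun x => (Finset.mem_sdiff.1 (e x).2).2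
  have heV : ∀ x : A₀, (e x : ℕ) ∈ V := fun x => (Finset.mem_sdiff.1 (e x).2).1
  have hnex : ∀ x y : A₀, (x : ℕ) ≠ e y := fun x y h => heA y (h ▸ x.2)
  let p : A₀ → Finset ℕ := fun x => {(x : ℕ), (e x : ℕ)}
  have hdis : ∀ x y : A₀, x ≠ y → Disjoint (p x) (p y) := by
    intro x y hxy
    have h1 : (x : ℕ) ≠ y := fun h => hxy (Subtype.ext h)
    have h2 : (e x : ℕ) ≠ e y := fun h => hxy (e.injective (Subtype.ext h))
    have h3 := hnex x y
    have h4 := hnex y x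
    rw [Finset.disjoint_left]
    intro z hz hz'
    simp only [p, Finset.mem_insert, Finset.mem_singleton] at hz hz'
    omega
  have hpinj : Function.Injective p := by
    intro x y hxy
    by_contra hne
    have := hdis x y hne
    rw [hxy, Finset.disjoint_self_iff_empty] at this
    simp [p] at this
  have hP : IsPairing (Finset.univ.image p) α := by
    refine ⟨?_, ?_, ?_⟩
    · rw [Finset.card_image_of_injective _ hpinj, Finset.card_univ, Fintype.card_coe]
      exact hke_card hF hA₀
    · intro c hc
      obtain ⟨x, _, rfl⟩ := Finset.mem_image.1 hc
      exact Finset.card_pair (hnex x x)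
    · intro c hc d hd hcd
      obtain ⟨x, _, rfl⟩ := Finset.mem_image.1 hc
      obtain ⟨y, _, rfl⟩ := Finset.mem_image.1 hd
      exact hdis x y (fun h => hcd (h ▸ rfl))
  refine ⟨_, hP, ?_⟩
  intro A hA
  simp only [trans', Finset.mem_filter, Finset.mem_powerset]
  refine ⟨?_, hke_card hF hA, ?_⟩
  · intro z hz
    rw [mem_famUnion']
    by_cases hz0 : z ∈ A₀
    · exact ⟨p ⟨z, hz0⟩, Finset.mem_image_of_mem _ (Finset.mem_univ _), by simp [p]⟩
    · refine ⟨p (e.symm ⟨z, Finset.mem_sdiff.2 ⟨hsub A hA hz, hz0⟩⟩),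
        Finset.mem_image_of_mem _ (Finset.mem_univ _), by simp [p]⟩
  · intro c hc
    obtain ⟨x, _, rfl⟩ := Finset.mem_image.1 hc
    by_cases hx : (x : ℕ) ∈ A
    · exact ⟨x, by simp [p, hx]⟩
    · have : (e x : ℕ) ∈ A := by
        by_contra h
        exact hx ((he' x A hA).1 h)
      exact ⟨e x, by simp [p, this]⟩

/-- a collection `F` of finite sets, all of cardinality `α`, is a maximal hke
collection iff `|⋃F| = 2α` and there is an equivalence relation on `⋃F` (given by its
partition `P` into equivalence classes) with exactly `α` classes, each of exactly two
elements, such that `F` is exactly the collection of subsets `B` of `⋃F` with `|B| = α`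
intersecting every class. -/
theorem isMaxHKE_iff_exists_pairing (F : Finset (Finset ℕ)) (α : ℕ) (hα : 0 < α)
    (hcard : ∀ A ∈ F, A.card = α) :
    IsMaxHKE F ↔
      ((famUnion F).card = 2 * α ∧
        ∃ P : Finset (Finset ℕ),
          P.card = α ∧
          (∀ c ∈ P, c.card = 2) ∧
          (∀ c ∈ P, ∀ c' ∈ P, c ≠ c' → Disjoint c c') ∧
          famUnion P = famUnion F ∧
          F = (famUnion F).powerset.filter
            (fun B => B.card = α ∧ ∀ c ∈ P, (B ∩ c).Nonempty)) := by
  constructor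
  · rintro ⟨⟨β, hβ⟩, hmax⟩
    have hne : F.Nonempty := by
      by_contra h
      rw [Finset.not_nonempty_iff_eq_empty] at h
      subst h
      refine hmax {{0}} (by simp) ⟨1, one_pos, ?_⟩
      intro Γ hΓ hΓn
      have : Γ = {{0}} := (Finset.subset_singleton_iff.1 hΓ).resolve_left hΓn.ne_empty
      subst this
      decide
    have hβα : β = α := by
      obtain ⟨A, hA⟩ := hne
      rw [← hke_card hβ hA, hcard A hA]
    subst hβα
    obtain ⟨P, hP, hFP⟩ := exists_ext hβ hne
    have hFe : F = trans' P β := by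
      by_contra h
      exact hmax _ (Finset.ssubset_iff_subset_ne.2 ⟨hFP, h⟩) ⟨β, trans_hke hα hP⟩
    have hU : famUnion F = famUnion P := by rw [hFe, union_trans hP]
    refine ⟨by rw [hU, card_union hP], P, hP.1, hP.2.1, hP.2.2, hU.symm, ?_⟩
    rw [hU]
    exact hFe
  · rintro ⟨-, P, h1, h2, h3, hU, hF⟩
    rw [← hU] at hF
    have hF' : F = trans' P α := hF
    rw [hF']
    exact trans_max hα ⟨h1, h2, h3⟩
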